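/- Let k ≥ 1 and let P, P' be database properties. Suppose that for every x = (x_1,…,x_k) ∈ X^k with pairwise distinct entries and every D ∈ DB there are sets S_1^{x,D}, …, S_k^{x,D} ⊆ Ȳ, each satisfying (⊥ ∈ S_i^{x,D} implies S_i^{x,D} = Ȳ), such that for all r, u ∈ Ȳ^k: if D[x↦r] ∈ P and D[x↦u] ∈ P', then there exists an index i with u_i ∈ S_i^{x,D} and r_i ≠ u_i. Then ⟦P → P'⟧_k ≤ max over all such x and D of e · Σ_{i=1}^{k} √(10 · |S_i^{x,D} ∩ Y| / M), where e is Euler's number. -/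

import Mathlib

noncomputable section

/- `Ȳ = Y ∪ {⊥}` is modeled by `Option Y` (`⊥ = none`), databases by `X → Option Y`,
and `ℂ[DB]` by `EuclideanSpace ℂ (X → Option Y)`. -/

/-- matrix (in the computational basis) of the single-register unitary `Comp` -/
def compMat (Y : Type*) [Fintype Y] [DecidableEq Y] :
    Matrix (Option Y) (Option Y) ℂ :=
  Matrix.of fun u v =>
    match u, v with
    | none, none => 0
    | some _, none => ((Real.sqrt (Fintype.card Y) : ℝ) : ℂ)⁻¹
    | none, some _ => ((Real.sqrt (Fintype.card Y) : ℝ) : ℂ)⁻¹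
    | some a, some b => (if a = b then (1 : ℂ) else 0) - ((Fintype.card Y : ℕ) : ℂ)⁻¹

/-- matrix of the diagonal unitary `O_ŷ` associated to a character `ŷ` of `Y` -/
def oMat {Y : Type*} [Fintype Y] [DecidableEq Y] [AddCommGroup Y] (c : AddChar Y ℂ) :
    Matrix (Option Y) (Option Y) ℂ :=
  Matrix.diagonal fun u => Option.elim u 1 fun r => c r

/-- matrix of the single-register compressed oracle `cO_ŷ = Comp ∘ O_ŷ ∘ Comp` -/
def cOMat {Y : Type*} [Fintype Y] [DecidableEq Y] [AddCommGroup Y] (c : AddChar Y ℂ) :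
    Matrix (Option Y) (Option Y) ℂ :=
  compMat Y * oMat c * compMat Y

/-- a single-register operator (given by its matrix `m`) acting at register `x0` -/
def liftMat {X Y : Type*} [Fintype X] [DecidableEq X] [DecidableEq Y] (x0 : X)
    (m : Matrix (Option Y) (Option Y) ℂ) :
    Matrix (X → Option Y) (X → Option Y) ℂ :=
  Matrix.of fun D' D => if ∀ a, a ≠ x0 → D' a = D a then m (D' x0) (D x0) else 0

/-- matrix of `cO_{x,ŷ}`: the composition of `cO_{ŷ i}` acting at register `x i` -/
def cOparMat {X Y : Type*} [Fintype X] [DecidableEq X] [Fintype Y] [DecidableEq Y]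
    [AddCommGroup Y] {k : ℕ} (x : Fin k → X) (c : Fin k → AddChar Y ℂ) :
    Matrix (X → Option Y) (X → Option Y) ℂ :=
  (List.ofFn fun i : Fin k => liftMat (x i) (cOMat (c i))).prod

/-- matrix of the orthogonal projection onto `span{e_D : D ∈ P}` -/
def projMat {ι : Type*} [DecidableEq ι] (P : Set ι) : Matrix ι ι ℂ := by
  classical exact Matrix.of fun i j => if i = j ∧ i ∈ P then 1 else 0

/-- the (continuous linear) operator on `ℓ²` given by a matrix -/
def toOp {ι : Type*} [Fintype ι] [DecidableEq ι] (m : Matrix ι ι ℂ) :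
    EuclideanSpace ℂ ι →L[ℂ] EuclideanSpace ℂ ι :=
  LinearMap.toContinuousLinearMap (Matrix.toEuclideanLin m)

/-- `D|^x`: the set of databases that coincide with `D` outside of `x` -/
def agreeOff {X Y : Type*} {k : ℕ} (D : X → Option Y) (x : Fin k → X) :
    Set (X → Option Y) :=
  {D' | ∀ a : X, (∀ i, x i ≠ a) → D' a = D a}

/-- The quantum transition capacity `⟦P → P' | X₀⟧_k`: the supremum, over all `x ∈ X₀^k`
with pairwise distinct entries, all `k`-tuples `ŷ` of characters of `Y` and all databases `D`,
of `‖P'|_{D|^x} ∘ cO_{x,ŷ} ∘ P|_{D|^x}‖` (`0` if the range is empty). -/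
def qtc {X Y : Type*} [Fintype X] [DecidableEq X] [Fintype Y] [DecidableEq Y]
    [AddCommGroup Y] (P P' : Set (X → Option Y)) (k : ℕ) (X₀ : Set X) : ℝ :=
  sSup {v : ℝ | ∃ (x : Fin k → X) (c : Fin k → AddChar Y ℂ) (D : X → Option Y),
    Function.Injective x ∧ (∀ i, x i ∈ X₀) ∧
    v = ‖(toOp (projMat (P' ∩ agreeOff D x))).comp
          ((toOp (cOparMat x c)).comp (toOp (projMat (P ∩ agreeOff D x))))‖}

end

/- `D[x↦r]`: the database redefined at the pairwise distinct points `x i` by values `r i` -/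
open Classical in
noncomputable def dbUpdate {X Y : Type*} {k : ℕ} (D : X → Option Y)
    (x : Fin k → X) (r : Fin k → Option Y) : X → Option Y :=
  fun a => if h : ∃ i, x i = a then r h.choose else D a

/-!
Each `cO_{ŷ_i}`, acting at register `x_i`, is split into the part that moves `x_i` to a different
value in `S_i` and the rest. A product of rests has no matrix entry from `P` to `P'`, because weak
recognition asks for some register to be moved to a different value in `S_i`. So only the difference
between the two products contributes, and as the full factors are unitary it has norm at most
`∏ (1 + β_i) - 1`, where `β_i` bounds the norm of the removed part. This is at most `e ∑ β_i` if
`∑ β_i ≤ 1`, and otherwise there is nothing to prove. If `⊥ ∉ S_i`, the norm of the removed part is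
estimated by the Frobenius norm: by unitarity the off-diagonal entries in row `y` contribute
`1 - |cO_ŷ(y, y)|²`, which is at most `6 / M` since `cO_ŷ(y, y)` is within `3 / M` of `ŷ(y)`. If
`S_i = Ȳ`, the trivial bound `2 ≤ √6` suffices.
-/

section Products

theorem norm_prod_ofFn_le {R : Type*} [SeminormedRing R] [NormOneClass R] {k : ℕ} {a : Fin k → R}
    {α : Fin k → ℝ} (ha : ∀ i, ‖a i‖ ≤ α i) : ‖(List.ofFn a).prod‖ ≤ ∏ i, α i := by
  refine (List.norm_prod_le _).trans ?_
  rw [List.map_ofFn, List.prod_ofFn]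
  exact Finset.prod_le_prod (fun i _ => norm_nonneg _) fun i _ => ha i

theorem norm_prod_ofFn_sub_prod_ofFn_le {R : Type*} [SeminormedRing R] [NormOneClass R] :
    ∀ {k : ℕ} {a b : Fin k → R} {α β : Fin k → ℝ}, (∀ i, ‖a i‖ ≤ α i) →
      (∀ i, ‖a i - b i‖ ≤ β i) →
      ‖(List.ofFn a).prod - (List.ofFn b).prod‖ ≤ ∏ i, (α i + β i) - ∏ i, α i
  | 0, _, _, _, _, _, _ => by simp
  | k + 1, a, b, α, β, ha, hab => by
    simp only [List.ofFn_succ, List.prod_cons, Fin.prod_univ_succ]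
    set A := (List.ofFn fun i : Fin k => a i.succ).prod
    set B := (List.ofFn fun i : Fin k => b i.succ).prod
    set p := ∏ i : Fin k, (α i.succ + β i.succ)
    have hAB : ‖A - B‖ ≤ p - ∏ i : Fin k, α i.succ :=
      norm_prod_ofFn_sub_prod_ofFn_le (fun i => ha i.succ) fun i => hab i.succ
    have hb (i : Fin (k + 1)) : ‖b i‖ ≤ α i + β i :=
      (norm_le_norm_add_norm_sub _ _).trans (add_le_add (ha i) (hab i))
    have hB : ‖B‖ ≤ p := norm_prod_ofFn_le fun i => hb i.succ
    have hα₀ : 0 ≤ α 0 := (norm_nonneg _).trans (ha 0)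
    have hβ₀ : 0 ≤ β 0 := (norm_nonneg _).trans (hab 0)
    calc ‖a 0 * A - b 0 * B‖ = ‖a 0 * (A - B) + (a 0 - b 0) * B‖ := by congr 1; noncomm_ring
      _ ≤ ‖a 0‖ * ‖A - B‖ + ‖a 0 - b 0‖ * ‖B‖ :=
        (norm_add_le _ _).trans (add_le_add (norm_mul_le _ _) (norm_mul_le _ _))
      _ ≤ α 0 * (p - ∏ i : Fin k, α i.succ) + β 0 * p := by
        gcongr
        exacts [ha 0, hab 0]
      _ = (α 0 + β 0) * p - α 0 * ∏ i : Fin k, α i.succ := by ring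

theorem norm_mul_mul_le_of_norm_le_one {R : Type*} [NonUnitalSeminormedRing R] {a c : R}
    (ha : ‖a‖ ≤ 1) (b : R) (hc : ‖c‖ ≤ 1) : ‖a * (b * c)‖ ≤ ‖b‖ :=
  calc ‖a * (b * c)‖ ≤ ‖a‖ * (‖b‖ * ‖c‖) := norm_mul_le_of_le le_rfl (norm_mul_le b c)
    _ ≤ 1 * (‖b‖ * 1) := by gcongr
    _ = ‖b‖ := by ring

theorem exp_sub_one_le_exp_mul_self (t : ℝ) : Real.exp t - 1 ≤ Real.exp t * t := by
  have h : Real.exp t * (1 - t) ≤ 1 :=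
    calc Real.exp t * (1 - t) ≤ Real.exp t * Real.exp (-t) := by
          gcongr
          exact Real.one_sub_le_exp_neg t
      _ = 1 := by rw [← Real.exp_add, add_neg_cancel, Real.exp_zero]
  linarith

theorem prod_one_add_sub_one_le_exp_one_mul_sum {ι : Type*} {s : Finset ι} {f : ι → ℝ}
    (hf : ∀ i, 0 ≤ f i) (hs : ∑ i ∈ s, f i ≤ 1) :
    ∏ i ∈ s, (1 + f i) - 1 ≤ Real.exp 1 * ∑ i ∈ s, f i := by
  have hs₀ : 0 ≤ ∑ i ∈ s, f i := Finset.sum_nonneg fun i _ => hf i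
  calc ∏ i ∈ s, (1 + f i) - 1 ≤ Real.exp (∑ i ∈ s, f i) - 1 := by
        gcongr
        exact Real.prod_one_add_le_exp_sum s hf
    _ ≤ Real.exp (∑ i ∈ s, f i) * ∑ i ∈ s, f i := exp_sub_one_le_exp_mul_self _
    _ ≤ Real.exp 1 * ∑ i ∈ s, f i := by gcongr

end Products

section Matrices

open scoped Matrix.Norms.L2Operator

theorem l2_opNorm_le_sqrt_sum_norm_sq {𝕜 m n : Type*} [RCLike 𝕜] [Fintype m] [Fintype n]
    [DecidableEq n] (A : Matrix m n 𝕜) : ‖A‖ ≤ √(∑ i, ∑ j, ‖A i j‖ ^ 2) := by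
  rw [Matrix.l2_opNorm_def]
  refine ContinuousLinearMap.opNorm_le_bound _ (Real.sqrt_nonneg _) fun v => ?_
  rw [EuclideanSpace.norm_eq, EuclideanSpace.norm_eq, ← Real.sqrt_mul (by positivity),
    Finset.sum_mul]
  refine Real.sqrt_le_sqrt (Finset.sum_le_sum fun i _ => ?_)
  calc ‖∑ j, A i j * v j‖ ^ 2 ≤ (∑ j, ‖A i j‖ * ‖v j‖) ^ 2 := by
        gcongr
        exact norm_sum_le_of_le _ fun j _ => norm_mul_le _ _
    _ ≤ (∑ j, ‖A i j‖ ^ 2) * ∑ j, ‖v j‖ ^ 2 := Finset.sum_mul_sq_le_sq_mul_sq _ _ _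

theorem sum_norm_sq_row_of_mem_unitaryGroup {𝕜 n : Type*} [RCLike 𝕜] [Fintype n] [DecidableEq n]
    {U : Matrix n n 𝕜} (hU : U ∈ Matrix.unitaryGroup n 𝕜) (i : n) : ∑ j, ‖U i j‖ ^ 2 = 1 := by
  have h : (U * star U) i i = 1 := by
    rw [Matrix.mem_unitaryGroup_iff.1 hU, Matrix.one_apply_eq]
  simp only [Matrix.mul_apply, Matrix.star_apply, RCLike.star_def, RCLike.mul_conj] at h
  exact_mod_cast h

variable {ι : Type*} [DecidableEq ι]

theorem projMat_eq_diagonal (P : Set ι) : projMat P = Matrix.diagonal (P.indicator 1) := by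
  classical
  ext i j
  simp only [projMat, Matrix.of_apply, Matrix.diagonal_apply, Set.indicator_apply, ite_and,
    Pi.one_apply]

variable [Fintype ι]

theorem norm_projMat_le_one (P : Set ι) : ‖projMat P‖ ≤ 1 := by
  rw [projMat_eq_diagonal, Matrix.l2_opNorm_diagonal, pi_norm_le_iff_of_nonneg zero_le_one]
  exact fun i => (norm_indicator_le_norm_self _ _).trans_eq norm_one

theorem projMat_mul_mul_projMat_eq_zero {P Q : Set ι} {m : Matrix ι ι ℂ}
    (h : ∀ j ∈ P, ∀ i ∈ Q, m i j = 0) : projMat Q * (m * projMat P) = 0 := by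
  ext i j
  rw [projMat_eq_diagonal, projMat_eq_diagonal, Matrix.diagonal_mul, Matrix.mul_diagonal]
  by_cases hi : i ∈ Q <;> by_cases hj : j ∈ P <;> simp [hi, hj, h]

theorem toOp_comp_toOp (a b : Matrix ι ι ℂ) : (toOp a).comp (toOp b) = toOp (a * b) :=
  ContinuousLinearMap.ext fun v => by simp [toOp]

theorem norm_toOp (a : Matrix ι ι ℂ) : ‖toOp a‖ = ‖a‖ :=
  Matrix.l2_opNorm_toEuclideanCLM a

/-- The part of the matrix `m` that moves a basis vector to a different one in `S`: its off-diagonal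
entries in the rows indexed by `S` (columns are inputs, rows are outputs). -/
noncomputable def offDiagRows (S : Set ι) (m : Matrix ι ι ℂ) : Matrix ι ι ℂ :=
  projMat S * (m - Matrix.diagonal m.diag)

theorem offDiagRows_apply_of_notMem {S : Set ι} {i : ι} (hi : i ∉ S) (m : Matrix ι ι ℂ) (j : ι) :
    offDiagRows S m i j = 0 := by
  simp [offDiagRows, projMat_eq_diagonal, hi]

theorem offDiagRows_apply_self (S : Set ι) (m : Matrix ι ι ℂ) (i : ι) :
    offDiagRows S m i i = 0 := by
  simp [offDiagRows, projMat_eq_diagonal]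

theorem offDiagRows_apply_of_mem_of_ne {S : Set ι} {i j : ι} (hi : i ∈ S) (hij : i ≠ j)
    (m : Matrix ι ι ℂ) : offDiagRows S m i j = m i j := by
  simp [offDiagRows, projMat_eq_diagonal, hi, hij]

theorem norm_offDiagRows_le_two {U : Matrix ι ι ℂ} (hU : U ∈ Matrix.unitaryGroup ι ℂ) (S : Set ι) :
    ‖offDiagRows S U‖ ≤ 2 := by
  nontriviality Matrix ι ι ℂ
  have hdiag : ‖Matrix.diagonal U.diag‖ ≤ 1 := by
    rw [Matrix.l2_opNorm_diagonal, pi_norm_le_iff_of_nonneg zero_le_one]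
    exact fun i => entry_norm_bound_of_unitary hU i i
  calc ‖offDiagRows S U‖ ≤ ‖projMat S‖ * ‖U - Matrix.diagonal U.diag‖ := norm_mul_le _ _
    _ ≤ 1 * (1 + 1) := by
      gcongr
      exacts [norm_projMat_le_one S, norm_sub_le_of_le (CStarRing.norm_of_mem_unitary hU).le hdiag]
    _ = 2 := by norm_num

theorem sum_norm_sq_offDiagRows {U : Matrix ι ι ℂ} (hU : U ∈ Matrix.unitaryGroup ι ℂ) {S : Set ι}
    {i : ι} (hi : i ∈ S) : ∑ j, ‖offDiagRows S U i j‖ ^ 2 = 1 - ‖U i i‖ ^ 2 := by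
  rw [← sum_norm_sq_row_of_mem_unitaryGroup hU i,
    ← Finset.add_sum_erase _ (fun j => ‖U i j‖ ^ 2) (Finset.mem_univ i),
    ← Finset.add_sum_erase _ _ (Finset.mem_univ i), offDiagRows_apply_self, norm_zero,
    add_sub_cancel_left, zero_pow two_ne_zero, zero_add]
  refine Finset.sum_congr rfl fun j hj => ?_
  rw [offDiagRows_apply_of_mem_of_ne hi (Finset.ne_of_mem_erase hj).symm]

end Matrices

section Registers

open scoped Kronecker Matrix.Norms.L2Operator

variable {X Y : Type*} [Fintype X] [DecidableEq X] [DecidableEq Y]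

theorem liftMat_eq_submatrix_kronecker (x₀ : X) (m : Matrix (Option Y) (Option Y) ℂ) :
    liftMat x₀ m = (m ⊗ₖ (1 : Matrix ({a // a ≠ x₀} → Option Y) _ ℂ)).submatrix
      (Equiv.funSplitAt x₀ (Option Y)) (Equiv.funSplitAt x₀ (Option Y)) := by
  ext D' D
  simp [liftMat, Matrix.one_apply, funext_iff]

theorem liftMat_sub (x₀ : X) (m n : Matrix (Option Y) (Option Y) ℂ) :
    liftMat x₀ (m - n) = liftMat x₀ m - liftMat x₀ n := by
  ext D' D
  simp only [liftMat, Matrix.of_apply, Matrix.sub_apply]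
  split_ifs <;> simp

theorem liftMat_apply_ne_zero_iff {x₀ : X} {m : Matrix (Option Y) (Option Y) ℂ}
    {D' D : X → Option Y} :
    liftMat x₀ m D' D ≠ 0 ↔ (∀ a, a ≠ x₀ → D' a = D a) ∧ m (D' x₀) (D x₀) ≠ 0 := by
  simp only [liftMat, Matrix.of_apply, ne_eq, ite_eq_right_iff, Classical.not_imp]

variable [Fintype Y]

/-- `liftMat x₀`, the action of single-register operators at register `x₀`, as a homomorphism of
`*`-algebras. It is contractive for that reason. -/
noncomputable def liftMatHom (x₀ : X) :
    Matrix (Option Y) (Option Y) ℂ →⋆ₙₐ[ℂ] Matrix (X → Option Y) (X → Option Y) ℂ where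
  toFun := liftMat x₀
  map_smul' z m := by
    simp [liftMat_eq_submatrix_kronecker, Matrix.smul_kronecker, Matrix.submatrix_smul]
  map_zero' := by simp [liftMat_eq_submatrix_kronecker]
  map_add' m n := by
    simp [liftMat_eq_submatrix_kronecker, Matrix.add_kronecker, Matrix.submatrix_add]
  map_mul' m n := by
    simp only [liftMat_eq_submatrix_kronecker, Matrix.submatrix_mul_equiv,
      ← Matrix.mul_kronecker_mul, one_mul]
  map_star' m := by
    simp [liftMat_eq_submatrix_kronecker, Matrix.star_eq_conjTranspose,
      Matrix.conjTranspose_kronecker]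

theorem norm_liftMat_le (x₀ : X) (m : Matrix (Option Y) (Option Y) ℂ) : ‖liftMat x₀ m‖ ≤ ‖m‖ :=
  NonUnitalStarAlgHom.norm_apply_le (liftMatHom x₀) m

theorem apply_ne_zero_of_prod_liftMat_apply_ne_zero :
    ∀ {k : ℕ} {x : Fin k → X} {m : Fin k → Matrix (Option Y) (Option Y) ℂ} {D' D : X → Option Y},
      Function.Injective x → (List.ofFn fun i => liftMat (x i) (m i)).prod D' D ≠ 0 →
      D' ∈ agreeOff D x ∧ ∀ i, m i (D' (x i)) (D (x i)) ≠ 0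
  | 0, _, _, D', D, _, h => by
    have hD : D' = D := by
      by_contra hne
      exact h (by rw [List.ofFn_zero, List.prod_nil, Matrix.one_apply_ne hne])
    exact ⟨fun a _ => congrFun hD a, fun i => i.elim0⟩
  | k + 1, x, m, D', D, hx, h => by
    rw [List.ofFn_succ, List.prod_cons, Matrix.mul_apply] at h
    obtain ⟨E, -, hE⟩ := Finset.exists_ne_zero_of_sum_ne_zero h
    obtain ⟨hhead, htail⟩ := mul_ne_zero_iff.1 hE
    obtain ⟨hD'E, hm₀⟩ := liftMat_apply_ne_zero_iff.1 hhead
    obtain ⟨hED, hm⟩ :=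
      apply_ne_zero_of_prod_liftMat_apply_ne_zero (hx.comp (Fin.succ_injective k)) htail
    have hne (i : Fin k) : x i.succ ≠ x 0 := hx.ne (Fin.succ_ne_zero i)
    refine ⟨fun a ha => ?_, Fin.cases ?_ fun i => ?_⟩
    · rw [hD'E a (ha 0).symm, hED a fun i => ha i.succ]
    · rwa [← hED (x 0) hne]
    · rw [hD'E _ (hne i)]
      exact hm i

end Registers

section Oracle

open scoped Matrix.Norms.L2Operator

theorem inv_sqrt_card_mul_self (Y : Type*) [Fintype Y] :
    ((√(Fintype.card Y) : ℝ) : ℂ)⁻¹ * ((√(Fintype.card Y) : ℝ) : ℂ)⁻¹ =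
      (Fintype.card Y : ℂ)⁻¹ := by
  rw [← mul_inv, ← Complex.ofReal_mul, Real.mul_self_sqrt (Nat.cast_nonneg _),
    Complex.ofReal_natCast]

variable {Y : Type*} [Fintype Y] [DecidableEq Y]

theorem compMat_mul_self [Nonempty Y] : compMat Y * compMat Y = 1 := by
  have hM : (Fintype.card Y : ℂ) ≠ 0 := Nat.cast_ne_zero.2 Fintype.card_ne_zero
  ext u v
  rw [Matrix.mul_apply, Fintype.sum_option]
  cases u <;> cases v <;>
    simp [compMat, Matrix.one_apply, inv_sqrt_card_mul_self, mul_sub, sub_mul, hM,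
      mul_left_comm (Fintype.card Y : ℂ)]

theorem star_compMat : star (compMat Y) = compMat Y := by
  ext u v
  cases u <;> cases v <;> simp [compMat, Matrix.star_apply, eq_comm, apply_ite]

theorem compMat_mem_unitaryGroup [Nonempty Y] :
    compMat Y ∈ Matrix.unitaryGroup (Option Y) ℂ := by
  rw [Matrix.mem_unitaryGroup_iff, star_compMat, compMat_mul_self]

variable [AddCommGroup Y]

theorem oMat_mem_unitaryGroup (c : AddChar Y ℂ) : oMat c ∈ Matrix.unitaryGroup (Option Y) ℂ := by
  rw [Matrix.mem_unitaryGroup_iff, oMat, Matrix.star_eq_conjTranspose,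
    Matrix.diagonal_conjTranspose, Matrix.diagonal_mul_diagonal, ← Matrix.diagonal_one]
  congr 1
  ext u
  cases u <;> simp [Complex.mul_conj']

theorem cOMat_mem_unitaryGroup (c : AddChar Y ℂ) : cOMat c ∈ Matrix.unitaryGroup (Option Y) ℂ :=
  mul_mem (mul_mem compMat_mem_unitaryGroup (oMat_mem_unitaryGroup c)) compMat_mem_unitaryGroup

theorem cOMat_apply_some_self (c : AddChar Y ℂ) (y : Y) :
    cOMat c (some y) (some y) = c y + (1 - 2 * c y) * (Fintype.card Y : ℂ)⁻¹ +
      (∑ z, c z) * (Fintype.card Y : ℂ)⁻¹ ^ 2 := by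
  calc cOMat c (some y) (some y)
      = (Fintype.card Y : ℂ)⁻¹ + ∑ z, ((if y = z then 1 else 0) - (Fintype.card Y : ℂ)⁻¹) * c z *
          ((if z = y then 1 else 0) - (Fintype.card Y : ℂ)⁻¹) := by
        simp [cOMat, oMat, compMat, Matrix.mul_apply, Matrix.diagonal_apply, Fintype.sum_option,
          inv_sqrt_card_mul_self]
    _ = (Fintype.card Y : ℂ)⁻¹ + (c y - 2 * c y * (Fintype.card Y : ℂ)⁻¹ +
          (∑ z, c z) * (Fintype.card Y : ℂ)⁻¹ ^ 2) := by
        simp only [sub_mul, mul_sub, ite_mul, mul_ite, one_mul, mul_one, zero_mul, mul_zero,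
          Finset.sum_sub_distrib, Finset.sum_ite_eq, Finset.sum_ite_eq', Finset.mem_univ, if_true,
          ← Finset.sum_mul, ← Finset.mul_sum]
        ring
    _ = _ := by ring

theorem norm_sub_cOMat_apply_some_self_le (c : AddChar Y ℂ) (y : Y) :
    ‖c y - cOMat c (some y) (some y)‖ ≤ 3 / Fintype.card Y := by
  have hM : (Fintype.card Y : ℂ) ≠ 0 := Nat.cast_ne_zero.2 Fintype.card_ne_zero
  rw [cOMat_apply_some_self]
  by_cases hc : c = 0
  · have hzero : c y - (c y + (1 - 2 * c y) * (Fintype.card Y : ℂ)⁻¹ +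
        (∑ z, c z) * (Fintype.card Y : ℂ)⁻¹ ^ 2) = 0 := by
      simp only [hc, AddChar.zero_apply, Finset.sum_const, Finset.card_univ, nsmul_eq_mul]
      field_simp
      ring
    rw [hzero, norm_zero]
    positivity
  · have hnum : ‖2 * c y - 1‖ ≤ 3 :=
      calc ‖2 * c y - 1‖ ≤ ‖2 * c y‖ + ‖(1 : ℂ)‖ := norm_sub_le _ _
        _ = 3 := by
          rw [norm_mul, c.norm_apply]
          norm_num
    calc _ = ‖(2 * c y - 1) / (Fintype.card Y : ℂ)‖ := by
          rw [AddChar.sum_eq_zero_iff_ne_zero.2 hc]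
          congr 1
          ring
      _ ≤ 3 / Fintype.card Y := by
          rw [norm_div, Complex.norm_natCast]
          gcongr

theorem one_sub_norm_sq_cOMat_apply_some_self_le (c : AddChar Y ℂ) (y : Y) :
    1 - ‖cOMat c (some y) (some y)‖ ^ 2 ≤ 6 / Fintype.card Y := by
  set d := cOMat c (some y) (some y)
  have hd : 1 - ‖d‖ ≤ 3 / Fintype.card Y :=
    calc 1 - ‖d‖ = ‖c y‖ - ‖d‖ := by rw [c.norm_apply]
      _ ≤ ‖c y - d‖ := norm_sub_norm_le _ _
      _ ≤ 3 / Fintype.card Y := norm_sub_cOMat_apply_some_self_le c y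
  calc 1 - ‖d‖ ^ 2 ≤ 2 * (1 - ‖d‖) := by linarith [sq_nonneg (1 - ‖d‖)]
    _ ≤ 2 * (3 / Fintype.card Y) := by gcongr
    _ = 6 / Fintype.card Y := by ring

theorem norm_offDiagRows_cOMat_le_of_none_notMem (c : AddChar Y ℂ) {S : Set (Option Y)}
    (hS : none ∉ S) :
    ‖offDiagRows S (cOMat c)‖ ≤ √(6 * {y | some y ∈ S}.ncard / Fintype.card Y) := by
  classical
  refine (l2_opNorm_le_sqrt_sum_norm_sq _).trans (Real.sqrt_le_sqrt ?_)
  have hnone : ∑ r, ‖offDiagRows S (cOMat c) none r‖ ^ 2 = 0 := by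
    simp [offDiagRows_apply_of_notMem hS]
  have hsome (y : Y) : ∑ r, ‖offDiagRows S (cOMat c) (some y) r‖ ^ 2 ≤
      if some y ∈ S then (6 / Fintype.card Y : ℝ) else 0 := by
    split_ifs with hy
    · rw [sum_norm_sq_offDiagRows (cOMat_mem_unitaryGroup c) hy]
      exact one_sub_norm_sq_cOMat_apply_some_self_le c y
    · simp [offDiagRows_apply_of_notMem hy]
  rw [Fintype.sum_option, hnone, zero_add]
  calc ∑ y, ∑ r, ‖offDiagRows S (cOMat c) (some y) r‖ ^ 2
      ≤ ∑ y, if some y ∈ S then (6 / Fintype.card Y : ℝ) else 0 :=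
        Finset.sum_le_sum fun y _ => hsome y
    _ = 6 * {y | some y ∈ S}.ncard / Fintype.card Y := by
        rw [← Finset.sum_filter, Finset.sum_const, nsmul_eq_mul, Set.ncard_eq_toFinset_card',
          Set.toFinset_ofPred, mul_div_right_comm, mul_comm]

theorem norm_offDiagRows_cOMat_le (c : AddChar Y ℂ) {S : Set (Option Y)}
    (hS : none ∈ S → S = Set.univ) :
    ‖offDiagRows S (cOMat c)‖ ≤ √(6 * {y | some y ∈ S}.ncard / Fintype.card Y) := by
  by_cases hnone : none ∈ S
  · have hM : (Fintype.card Y : ℝ) ≠ 0 := Nat.cast_ne_zero.2 Fintype.card_ne_zero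
    have hcard : (6 * {y : Y | some y ∈ S}.ncard / Fintype.card Y : ℝ) = 6 := by
      simp [hS hnone, Set.ncard_univ, hM]
    rw [hcard]
    exact (norm_offDiagRows_le_two (cOMat_mem_unitaryGroup c) S).trans
      (Real.le_sqrt_of_sq_le (by norm_num))
  · exact norm_offDiagRows_cOMat_le_of_none_notMem c hnone

end Oracle

section Transition

open scoped Matrix.Norms.L2Operator

variable {X Y : Type*} {k : ℕ}

/-- The local properties `S i` of the registers `x i` weakly recognize the transition from `P` to
`P'`: it always changes some register `x i` to a value in `S i`. -/
def WeaklyRecognizes (x : Fin k → X) (S : Fin k → Set (Option Y)) (P P' : Set (X → Option Y)) :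
    Prop :=
  ∀ D ∈ P, ∀ D' ∈ P', ∃ i, D' (x i) ∈ S i ∧ D (x i) ≠ D' (x i)

theorem dbUpdate_comp_of_mem_agreeOff {D D' : X → Option Y} {x : Fin k → X}
    (h : D' ∈ agreeOff D x) : dbUpdate D x (D' ∘ x) = D' := by
  funext a
  by_cases ha : ∃ i, x i = a
  · simp only [dbUpdate, ha, dite_true, Function.comp_apply, ha.choose_spec]
  · simp only [dbUpdate, ha, dite_false, h a (not_exists.1 ha)]

theorem weaklyRecognizes_inter_agreeOff {x : Fin k → X} {S : Fin k → Set (Option Y)}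
    {P P' : Set (X → Option Y)} {D : X → Option Y}
    (h : ∀ r u : Fin k → Option Y, dbUpdate D x r ∈ P → dbUpdate D x u ∈ P' →
      ∃ i, u i ∈ S i ∧ r i ≠ u i) :
    WeaklyRecognizes x S (P ∩ agreeOff D x) (P' ∩ agreeOff D x) := by
  intro D₁ h₁ D₂ h₂
  refine h (D₁ ∘ x) (D₂ ∘ x) ?_ ?_
  · rw [dbUpdate_comp_of_mem_agreeOff h₁.2]
    exact h₁.1
  · rw [dbUpdate_comp_of_mem_agreeOff h₂.2]
    exact h₂.1

variable [Fintype X] [DecidableEq X] [Fintype Y] [DecidableEq Y] {x : Fin k → X}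
  {S : Fin k → Set (Option Y)} {P P' : Set (X → Option Y)}

theorem WeaklyRecognizes.projMat_mul_prod_mul_projMat_eq_zero (h : WeaklyRecognizes x S P P')
    (hx : Function.Injective x) (m : Fin k → Matrix (Option Y) (Option Y) ℂ) :
    projMat P' * ((List.ofFn fun i => liftMat (x i) (m i - offDiagRows (S i) (m i))).prod *
      projMat P) = 0 := by
  refine projMat_mul_mul_projMat_eq_zero fun D hD D' hD' => ?_
  by_contra hne
  obtain ⟨i, hiS, hi⟩ := h D hD D' hD'
  refine (apply_ne_zero_of_prod_liftMat_apply_ne_zero hx hne).2 i ?_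
  rw [Matrix.sub_apply, offDiagRows_apply_of_mem_of_ne hiS hi.symm, sub_self]

theorem WeaklyRecognizes.norm_projMat_mul_prod_mul_projMat_le (h : WeaklyRecognizes x S P P')
    (hx : Function.Injective x) {m : Fin k → Matrix (Option Y) (Option Y) ℂ} {β : Fin k → ℝ}
    (hm : ∀ i, ‖m i‖ ≤ 1) (hβ : ∀ i, ‖offDiagRows (S i) (m i)‖ ≤ β i) :
    ‖projMat P' * ((List.ofFn fun i => liftMat (x i) (m i)).prod * projMat P)‖ ≤
      Real.exp 1 * ∑ i, β i := by
  set A := (List.ofFn fun i => liftMat (x i) (m i)).prod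
  set B := (List.ofFn fun i => liftMat (x i) (m i - offDiagRows (S i) (m i))).prod
  have hlift (i : Fin k) : ‖liftMat (x i) (m i)‖ ≤ 1 := (norm_liftMat_le _ _).trans (hm i)
  rcases le_total (∑ i, β i) 1 with hsum | hsum
  · have hAB : ‖A - B‖ ≤ ∏ i, (1 + β i) - 1 := by
      simpa using norm_prod_ofFn_sub_prod_ofFn_le hlift fun i => by
        rw [← liftMat_sub, sub_sub_cancel]
        exact (norm_liftMat_le _ _).trans (hβ i)
    calc ‖projMat P' * (A * projMat P)‖ = ‖projMat P' * ((A - B) * projMat P)‖ := by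
          rw [sub_mul, mul_sub, h.projMat_mul_prod_mul_projMat_eq_zero hx, sub_zero]
      _ ≤ ‖A - B‖ :=
          norm_mul_mul_le_of_norm_le_one (norm_projMat_le_one _) _ (norm_projMat_le_one _)
      _ ≤ ∏ i, (1 + β i) - 1 := hAB
      _ ≤ Real.exp 1 * ∑ i, β i :=
          prod_one_add_sub_one_le_exp_one_mul_sum (fun i => (norm_nonneg _).trans (hβ i)) hsum
  · calc ‖projMat P' * (A * projMat P)‖ ≤ ‖A‖ :=
          norm_mul_mul_le_of_norm_le_one (norm_projMat_le_one _) _ (norm_projMat_le_one _)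
      _ ≤ 1 := by simpa using norm_prod_ofFn_le hlift
      _ ≤ Real.exp 1 * ∑ i, β i :=
          one_le_mul_of_one_le_of_one_le (Real.one_le_exp zero_le_one) hsum

variable [AddCommGroup Y]

theorem WeaklyRecognizes.norm_projMat_mul_cOparMat_mul_projMat_le (h : WeaklyRecognizes x S P P')
    (hx : Function.Injective x) (hS : ∀ i, none ∈ S i → S i = Set.univ)
    (c : Fin k → AddChar Y ℂ) :
    ‖projMat P' * (cOparMat x c * projMat P)‖ ≤
      Real.exp 1 * ∑ i, √(6 * {y | some y ∈ S i}.ncard / Fintype.card Y) :=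
  h.norm_projMat_mul_prod_mul_projMat_le hx
    (fun i => (CStarRing.norm_of_mem_unitary (cOMat_mem_unitaryGroup (c i))).le)
    fun i => norm_offDiagRows_cOMat_le (c i) (hS i)

theorem qtc_le_sSup {X₀ : Set X} {b : (Fin k → X) → (X → Option Y) → ℝ}
    (hb : ∀ x c D, Function.Injective x → (∀ i, x i ∈ X₀) →
      ‖projMat (P' ∩ agreeOff D x) * (cOparMat x c * projMat (P ∩ agreeOff D x))‖ ≤ b x D) :
    qtc P P' k X₀ ≤
      sSup {v : ℝ | ∃ x D, Function.Injective x ∧ (∀ i, x i ∈ X₀) ∧ v = b x D} := by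
  refine Real.sSup_le ?_ (Real.sSup_nonneg ?_)
  · rintro _ ⟨x, c, D, hx, hX₀, rfl⟩
    rw [toOp_comp_toOp, toOp_comp_toOp, norm_toOp]
    refine (hb x c D hx hX₀).trans (le_csSup ?_ ⟨x, D, hx, hX₀, rfl⟩)
    refine ((Set.finite_range (Function.uncurry b)).subset ?_).bddAbove
    rintro _ ⟨x, D, -, -, rfl⟩
    exact ⟨(x, D), rfl⟩
  · rintro _ ⟨x, D, hx, hX₀, rfl⟩
    exact (norm_nonneg _).trans (hb x 0 D hx hX₀)

end Transition

theorem stmt_9_general {X Y : Type*} [Fintype X] [DecidableEq X]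
    [Fintype Y] [DecidableEq Y] [AddCommGroup Y]
    {C : ℝ} (hC : 6 ≤ C) (k : ℕ) (X₀ : Set X) (P P' : Set (X → Option Y))
    (S : (Fin k → X) → (X → Option Y) → Fin k → Set (Option Y))
    (hbot : ∀ x D i, Function.Injective x → (∀ i, x i ∈ X₀) →
      none ∈ S x D i → S x D i = Set.univ)
    (hrec : ∀ x D r u, Function.Injective x → (∀ i, x i ∈ X₀) →
      dbUpdate D x r ∈ P → dbUpdate D x u ∈ P' → ∃ i, u i ∈ S x D i ∧ r i ≠ u i) :
    qtc P P' k X₀ ≤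
      sSup {v : ℝ | ∃ x D, Function.Injective x ∧ (∀ i, x i ∈ X₀) ∧
        v = Real.exp 1 * ∑ i : Fin k,
          √(C * {y | some y ∈ S x D i}.ncard / Fintype.card Y)} := by
  refine qtc_le_sSup fun x c D hx hX₀ => ?_
  have hweak : WeaklyRecognizes x (S x D) (P ∩ agreeOff D x) (P' ∩ agreeOff D x) :=
    weaklyRecognizes_inter_agreeOff fun r u => hrec x D r u hx hX₀
  refine (hweak.norm_projMat_mul_cOparMat_mul_projMat_le hx
    (fun i => hbot x D i hx hX₀) c).trans ?_
  gcongr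

theorem stmt_9 {X Y : Type*} [Fintype X] [DecidableEq X] [Nonempty X]
    [Fintype Y] [DecidableEq Y] [AddCommGroup Y]
    (k : ℕ) (hk : 1 ≤ k) (P P' : Set (X → Option Y))
    -- the 1-local properties `L_i^{x,D}`, given as subsets `S x D i ⊆ Ȳ`
    (S : (Fin k → X) → (X → Option Y) → Fin k → Set (Option Y))
    -- if `⊥ ∈ S_i^{x,D}` then `S_i^{x,D} = Ȳ`
    (hbot : ∀ (x : Fin k → X) (D : X → Option Y) (i : Fin k), Function.Injective x →
      none ∈ S x D i → S x D i = Set.univ)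
    -- weak recognition
    (hrec : ∀ (x : Fin k → X) (D : X → Option Y) (r u : Fin k → Option Y),
      Function.Injective x → dbUpdate D x r ∈ P → dbUpdate D x u ∈ P' →
        ∃ i, u i ∈ S x D i ∧ r i ≠ u i) :
    qtc P P' k Set.univ ≤
      sSup {v : ℝ | ∃ (x : Fin k → X) (D : X → Option Y), Function.Injective x ∧
        v = Real.exp 1 * ∑ i : Fin k,
          Real.sqrt (10 * ({y : Y | some y ∈ S x D i}.ncard : ℝ) / Fintype.card Y)} := by
  simpa using stmt_9_general (C := 10) (by norm_num) k Set.univ P P' S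
    (fun x D i hx _ => hbot x D i hx) fun x D r u hx _ => hrec x D r u hx
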